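/- Let L = ℤp₁ + ℤp₂ be a lattice with ω = p₂/p₁ ∉ ℝ, σ its Weierstrass sigma-function, ξ₀, a ∈ ℂ and g elliptic with periods p₁, p₂ and g not identically zero. Suppose Im(a p_j) = Im(v_j) + 2 m_j π for some m_j ∈ ℤ, j = 1,2, where v_j = −3ξ₀/p_j + ξ₀ p_j² ∑_{λ ∈ L \ {0,−p_j}} 1/(λ(λ+p_j)²). Then the function f(z) = e^{az} g(z) σ(z)/σ(z − ξ₀) satisfies f(z + p_j) = e^{α_j} f(z) with α_j = a p_j − v_j − 2 m_j π i ∈ ℝ, and hence its phase f/|f| is doubly periodic with periods p₁, p₂. -/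

import Mathlib

open Complex Filter

noncomputable section

/-- The lattice generated by `p₁, p₂`. -/
def lat (p₁ p₂ : ℂ) : Set ℂ := {z | ∃ m n : ℤ, z = (m : ℂ) * p₁ + (n : ℂ) * p₂}

/-- The Weierstrass sigma-function of the lattice generated by `p₁, p₂`. -/
def wsigma (p₁ p₂ : ℂ) (z : ℂ) : ℂ :=
  z * ∏' l : {l : ℂ // l ∈ lat p₁ p₂ ∧ l ≠ 0},
      Complex.exp (z / (l : ℂ) + z ^ 2 / (2 * (l : ℂ) ^ 2)) * (1 - z / (l : ℂ))

/-- The constant `v_j` associated to `ξ₀` and a period `pj`. -/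
def vconst (p₁ p₂ ξ₀ pj : ℂ) : ℂ :=
  -3 * ξ₀ / pj + ξ₀ * pj ^ 2 *
    ∑' l : {l : ℂ // l ∈ lat p₁ p₂ ∧ l ≠ 0 ∧ l ≠ -pj},
      1 / ((l : ℂ) * ((l : ℂ) + pj) ^ 2)

/-- The (half-open) fundamental parallelogram spanned by `p₁, p₂`. -/
def fpar (p₁ p₂ : ℂ) : Set ℂ :=
  {z | ∃ s t : ℝ, 0 ≤ s ∧ s < 1 ∧ 0 ≤ t ∧ t < 1 ∧ z = (s : ℂ) * p₁ + (t : ℂ) * p₂}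

/-!
Each factor of the product defining `σ` is a linear polynomial times the exponential of a quadratic
one, both given explicitly. Translating `z` by a period `p` therefore turns the factor at `l` into
the factor at `l + p`, up to a constant and `exp (A l * z + B l * z ^ 2)` with explicit rational
`A l`, `B l`. Over the lattice the `B l` cancel in pairs under `l ↦ -l - p`, while the `A l` add up
to the quasi-period `η = 3 / p - p² ∑ 1 / (l (l + p)²)`. Hence `σ (z + p) = c * exp (η * z) * σ z`,
so `σ z / σ (z - ξ₀)` is multiplied by `exp (η * ξ₀)` when `z` moves to `z + p`, and
`v = -ξ₀ * η`. A function multiplied by a positive real number keeps its phase.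
-/

section ElementaryFactor

/-- The Weierstrass elementary factor `E₂` of genus two. -/
def elementaryFactor (u : ℂ) : ℂ := exp (u + u ^ 2 / 2) * (1 - u)

@[simp]
lemma elementaryFactor_zero : elementaryFactor 0 = 1 := by simp [elementaryFactor]

lemma elementaryFactor_sub_one_isBigO_cube :
    (fun u ↦ elementaryFactor u - 1) =O[nhds 0] fun u ↦ u ^ 3 := by
  have isBigO_one {q : ℂ → ℂ} (hq : Continuous q) : q =O[nhds 0] fun _ ↦ (1 : ℂ) :=
    (hq.tendsto 0).isBigO_one ℂ
  have mul_cube {q : ℂ → ℂ} (hq : Continuous q) :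
      (fun u ↦ u ^ 3 * q u) =O[nhds 0] fun u ↦ u ^ 3 := by
    simpa using (Asymptotics.isBigO_refl (fun u : ℂ ↦ u ^ 3) (nhds 0)).mul (isBigO_one hq)
  have exponent_tendsto : Tendsto (fun u : ℂ ↦ u + u ^ 2 / 2) (nhds 0) (nhds 0) := by
    refine Continuous.tendsto' (by fun_prop) _ _ ?_
    simp
  have exponent_cube : (fun u : ℂ ↦ (u + u ^ 2 / 2) ^ 3) =O[nhds 0] fun u ↦ u ^ 3 :=
    (mul_cube (q := fun u ↦ (1 + u / 2) ^ 3) (by fun_prop)).congr_left fun u ↦ by ring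
  have exp_remainder :=
    ((exp_sub_sum_range_isBigO_pow 3).comp_tendsto exponent_tendsto).trans exponent_cube
  have linear_isBigO := isBigO_one (q := fun u ↦ 1 - u) (by fun_prop)
  have polynomial_part := mul_cube (q := fun u ↦ -(1 / 2) - 3 / 8 * u - u ^ 2 / 8) (by fun_prop)
  refine (((exp_remainder.mul linear_isBigO).congr_right fun u ↦ mul_one _).add
    polynomial_part).congr_left fun u ↦ ?_
  simp only [elementaryFactor, Function.comp, Finset.sum_range_succ, Finset.sum_range_zero,
    Nat.factorial]
  push_cast
  ring

end ElementaryFactor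

section DiscreteSubgroup

variable (L : Submodule ℤ ℂ) [DiscreteTopology L]

lemma finrank_int_le_two : Module.finrank ℤ L ≤ 2 := by
  have rank_eq := Real.finrank_eq_int_finrank_of_discrete (s := (L : Set ℂ)) (by
    rw [Submodule.span_eq]; infer_instance)
  rw [Set.finrank, Set.finrank, Submodule.span_eq] at rank_eq
  rw [← rank_eq, ← finrank_real_complex]
  exact Submodule.finrank_le _

lemma summable_norm_sub_inv_cube (x : ℂ) : Summable fun l : L ↦ ‖(l : ℂ) - x‖⁻¹ ^ 3 :=
  ZLattice.summable_norm_sub_inv_pow L 3 (by have := finrank_int_le_two L; lia) x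

lemma mul_sq_le_pow_three_add_pow_three {x y : ℝ} (hx : 0 ≤ x) (hy : 0 ≤ y) :
    x * y ^ 2 ≤ x ^ 3 + y ^ 3 := by
  nlinarith [mul_nonneg (add_nonneg hx hy) (sq_nonneg (x - y)), mul_nonneg (sq_nonneg x) hy]

lemma summable_inv_sub_mul_inv_sub_sq (x y : ℂ) :
    Summable fun l : L ↦ ((l : ℂ) - x)⁻¹ * ((l : ℂ) - y)⁻¹ ^ 2 := by
  refine .of_norm_bounded
    ((summable_norm_sub_inv_cube L x).add (summable_norm_sub_inv_cube L y)) fun l ↦ ?_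
  simpa only [norm_mul, norm_pow, norm_inv] using
    mul_sq_le_pow_three_add_pow_three (inv_nonneg.2 (norm_nonneg _)) (inv_nonneg.2 (norm_nonneg _))

lemma tendsto_div_coe_cofinite (z : ℂ) :
    Tendsto (fun l : L ↦ z / (l : ℂ)) cofinite (nhds 0) := by
  have coe_tendsto : Tendsto ((↑) : L → ℂ) cofinite (Bornology.cobounded ℂ) := by
    rw [Metric.cobounded_eq_cocompact]
    exact L.toAddSubgroup.tendsto_coe_cofinite_of_discrete ⟨inferInstanceAs (DiscreteTopology L)⟩
  simpa [div_eq_mul_inv] using (tendsto_inv₀_cobounded.comp coe_tendsto).const_mul z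

lemma summable_elementaryFactor_sub_one (z : ℂ) :
    Summable fun l : L ↦ elementaryFactor (z / l) - 1 := by
  have cube_summable : Summable fun l : L ↦ ‖(z / (l : ℂ)) ^ 3‖ := by
    refine ((summable_norm_sub_inv_cube L 0).mul_left (‖z‖ ^ 3)).congr fun l ↦ ?_
    simp [div_eq_mul_inv, mul_pow]
  exact summable_of_isBigO cube_summable
    (elementaryFactor_sub_one_isBigO_cube.comp_tendsto (tendsto_div_coe_cofinite L z)).norm_right

end DiscreteSubgroup

lemma eventually_cofinite_coe_ne {α : Type*} {P : α → Prop} (x : α) :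
    ∀ᶠ y : Subtype P in cofinite, (y : α) ≠ x :=
  Subtype.val_injective.tendsto_cofinite (eventually_cofinite_ne x)

@[to_additive]
lemma tprod_subtype_congr_of_ne_one {α M : Type*} [CommMonoid M] [TopologicalSpace M] {f : α → M}
    {s t : Set α} (h : ∀ x, f x ≠ 1 → (x ∈ s ↔ x ∈ t)) : ∏' x : s, f x = ∏' x : t, f x := by
  classical
  rw [tprod_subtype, tprod_subtype]
  refine tprod_congr fun x ↦ ?_
  by_cases hx : f x = 1
  · simp [Set.mulIndicator_apply, hx]
  · simp [Set.mulIndicator_apply, h x hx]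

section InfiniteProduct

variable {ι R : Type*} [NormedCommRing R] [NormOneClass R] [CompleteSpace R] {f : ι → R}

lemma multipliable_of_summable_sub_one (hf : Summable fun i ↦ ‖f i - 1‖) : Multipliable f := by
  simpa using multipliable_one_add_of_summable hf

lemma tprod_ne_zero_of_summable_sub_one [NormMulClass R] (hf : Summable fun i ↦ ‖f i - 1‖)
    (hf₀ : ∀ i, f i ≠ 0) : ∏' i, f i ≠ 0 := by
  simpa using tprod_one_add_ne_zero_of_summable (f := fun i ↦ f i - 1) (by simpa using hf₀) hf

end InfiniteProduct

section SigmaFactor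

/-- The factor of the sigma-function that vanishes at the lattice point `l`, so that the factor `z`
of `σ` is the one at `l = 0`. -/
def sigmaFactor (l z : ℂ) : ℂ := if l = 0 then z else elementaryFactor (z / l)

/-- The constant `c` in `sigmaFactor l z = c * (z - l) * exp (z / l + (z / l) ^ 2 / 2)`. -/
def sigmaFactorCoeff (l : ℂ) : ℂ := if l = 0 then 1 else -l⁻¹

lemma sigmaFactorCoeff_ne_zero (l : ℂ) : sigmaFactorCoeff l ≠ 0 := by
  unfold sigmaFactorCoeff
  split_ifs with hl
  · exact one_ne_zero
  · exact neg_ne_zero.2 (inv_ne_zero hl)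

-- At `l = 0` this relies on `z / 0 = 0`.
lemma sigmaFactor_eq (l z : ℂ) :
    sigmaFactor l z = sigmaFactorCoeff l * (z - l) * exp (z / l + (z / l) ^ 2 / 2) := by
  by_cases hl : l = 0
  · simp [sigmaFactor, sigmaFactorCoeff, hl]
  · simp only [sigmaFactor, sigmaFactorCoeff, elementaryFactor, hl, if_false]
    field_simp
    ring

/-- The coefficient of `z` in the exponent relating the factors of `σ` at `l` and `l + p`. -/
def shiftLinearCoeff (p l : ℂ) : ℂ := (l + p)⁻¹ - l⁻¹ + p * (l + p)⁻¹ ^ 2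

/-- The coefficient of `z ^ 2` in the exponent relating the factors of `σ` at `l` and `l + p`. -/
def shiftQuadraticCoeff (p l : ℂ) : ℂ := ((l + p)⁻¹ ^ 2 - l⁻¹ ^ 2) / 2

/-- The constant relating the factors of `σ` at `l` and `l + p`. -/
def shiftConst (p l : ℂ) : ℂ :=
  sigmaFactorCoeff (l + p) / sigmaFactorCoeff l * exp (p / (l + p) + (p / (l + p)) ^ 2 / 2)

lemma sigmaFactor_add_add (p l z : ℂ) :
    sigmaFactor (l + p) (z + p) = shiftConst p l *
      exp (shiftLinearCoeff p l * z + shiftQuadraticCoeff p l * z ^ 2) * sigmaFactor l z := by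
  have exponent_eq : (z + p) / (l + p) + ((z + p) / (l + p)) ^ 2 / 2 =
      (p / (l + p) + (p / (l + p)) ^ 2 / 2) +
        (shiftLinearCoeff p l * z + shiftQuadraticCoeff p l * z ^ 2) +
        (z / l + (z / l) ^ 2 / 2) := by
    simp only [shiftLinearCoeff, shiftQuadraticCoeff]
    ring
  rw [sigmaFactor_eq, sigmaFactor_eq, exponent_eq, exp_add, exp_add, shiftConst]
  nth_rewrite 1 [← div_mul_cancel₀ (sigmaFactorCoeff (l + p)) (sigmaFactorCoeff_ne_zero l)]
  ring

-- The two Kronecker terms stand for the poles at `l = 0` and `l = -p`, where the last term is `0`.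
lemma shiftLinearCoeff_eq {p : ℂ} (hp : p ≠ 0) (l : ℂ) :
    shiftLinearCoeff p l = (if l = 0 then 2 / p else 0) + (if l = -p then 1 / p else 0) -
      p ^ 2 * (1 / (l * (l + p) ^ 2)) := by
  rcases eq_or_ne l 0 with rfl | hl
  · simp only [shiftLinearCoeff, zero_add, inv_zero, if_true, zero_eq_neg, hp, if_false, zero_mul,
      div_zero, mul_zero, sub_zero, add_zero]
    field_simp
    norm_num
  rcases eq_or_ne l (-p) with rfl | hlp
  · simp [shiftLinearCoeff, hp]
  have hlp' : l + p ≠ 0 := mt eq_neg_of_add_eq_zero_left hlp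
  simp only [shiftLinearCoeff, hl, hlp, if_false]
  field_simp
  ring

lemma shiftConst_ne_zero (p l : ℂ) : shiftConst p l ≠ 0 :=
  mul_ne_zero (div_ne_zero (sigmaFactorCoeff_ne_zero _) (sigmaFactorCoeff_ne_zero _))
    (exp_ne_zero _)

lemma shiftConst_eq_elementaryFactor {p l : ℂ} (hl : l ≠ 0) (hlp : l + p ≠ 0) :
    shiftConst p l = elementaryFactor (p / (l + p)) := by
  simp only [shiftConst, sigmaFactorCoeff, elementaryFactor, hl, hlp, if_false]
  field_simp
  ring

end SigmaFactor

section QuasiPeriod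

variable (L : Submodule ℤ ℂ)

/-- The quasi-period `η` of the sigma-function of `L` along the period `p`, for which
`σ (z + p) = c * exp (η * z) * σ z`. The terms at `l = 0` and `l = -p` are `1 / 0 = 0`. -/
def quasiPeriod (p : ℂ) : ℂ := 3 / p - p ^ 2 * ∑' l : L, 1 / ((l : ℂ) * ((l : ℂ) + p) ^ 2)

variable [DiscreteTopology L]

lemma exists_hasProd_shiftConst (p : L) :
    ∃ c ≠ 0, HasProd (fun l : L ↦ shiftConst p l) c := by
  have shifted_summable : Summable fun l : L ↦ elementaryFactor (p / (l + p)) - 1 := by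
    refine ((Equiv.addRight p).summable_iff.2
      (summable_elementaryFactor_sub_one L p)).congr fun l ↦ ?_
    simp only [Function.comp, Equiv.coe_addRight, Submodule.coe_add]
  have const_summable : Summable fun l : L ↦ shiftConst p l - 1 := by
    refine shifted_summable.congr_cofinite ?_
    filter_upwards [eventually_cofinite_coe_ne 0, eventually_cofinite_coe_ne (-p : ℂ)] with l hl hlp
    rw [shiftConst_eq_elementaryFactor hl (mt eq_neg_of_add_eq_zero_left hlp)]
  exact ⟨_, tprod_ne_zero_of_summable_sub_one const_summable.norm fun l ↦ shiftConst_ne_zero p l,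
    (multipliable_of_summable_sub_one const_summable.norm).hasProd⟩

lemma summable_shiftQuadraticCoeff (p : ℂ) :
    Summable fun l : L ↦ shiftQuadraticCoeff p l := by
  refine (((summable_inv_sub_mul_inv_sub_sq L 0 (-p)).add
    (summable_inv_sub_mul_inv_sub_sq L (-p) 0)).mul_left (-p / 2)).congr_cofinite ?_
  filter_upwards [eventually_cofinite_coe_ne 0, eventually_cofinite_coe_ne (-p : ℂ)] with l hl hlp
  have hlp : (l : ℂ) + p ≠ 0 := mt eq_neg_of_add_eq_zero_left hlp
  simp only [shiftQuadraticCoeff, sub_zero, sub_neg_eq_add]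
  field_simp
  ring

lemma hasSum_shiftQuadraticCoeff (p : L) :
    HasSum (fun l : L ↦ shiftQuadraticCoeff p l) 0 := by
  have reflect (l : L) : shiftQuadraticCoeff p ((-p - l : L) : ℂ) = -shiftQuadraticCoeff p l := by
    have negated : -(p : ℂ) - l = -(l + p) := by ring
    simp only [shiftQuadraticCoeff, Submodule.coe_sub, Submodule.coe_neg, negated, inv_neg,
      even_two.neg_pow]
    ring
  have sum_eq_neg : ∑' l : L, shiftQuadraticCoeff p l = -∑' l : L, shiftQuadraticCoeff p l := by
    rw [← tsum_neg, ← (Equiv.subLeft (-p)).tsum_eq]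
    exact tsum_congr reflect
  exact self_eq_neg.1 sum_eq_neg ▸ (summable_shiftQuadraticCoeff L p).hasSum

lemma hasSum_shiftLinearCoeff {p : L} (hp : p ≠ 0) :
    HasSum (fun l : L ↦ shiftLinearCoeff p l) (quasiPeriod L p) := by
  have hp' : (p : ℂ) ≠ 0 := by simpa using hp
  have series_hasSum :
      HasSum (fun l : L ↦ 1 / ((l : ℂ) * (l + p) ^ 2)) (∑' l : L, 1 / ((l : ℂ) * (l + p) ^ 2)) := by
    refine Summable.hasSum ((summable_inv_sub_mul_inv_sub_sq L 0 (-p)).congr fun l ↦ ?_)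
    simp [mul_comm]
  have total := ((hasSum_ite_eq (0 : L) (2 / (p : ℂ))).add (hasSum_ite_eq (-p) (1 / (p : ℂ)))).sub
    (series_hasSum.mul_left ((p : ℂ) ^ 2))
  rw [show quasiPeriod L p = 2 / p + 1 / p -
    p ^ 2 * ∑' l : L, 1 / ((l : ℂ) * (l + p) ^ 2) by rw [quasiPeriod]; ring]
  refine total.congr_fun fun l ↦ ?_
  simp only [shiftLinearCoeff_eq hp', Subtype.ext_iff, Submodule.coe_zero, Submodule.coe_neg]

end QuasiPeriod

section Sigma

/-- The set `lat p₁ p₂` as a subgroup of `ℂ`. -/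
def periodLattice (p₁ p₂ : ℂ) : Submodule ℤ ℂ := Submodule.span ℤ {p₁, p₂}

lemma mem_lat_iff_mem_periodLattice {p₁ p₂ l : ℂ} : l ∈ lat p₁ p₂ ↔ l ∈ periodLattice p₁ p₂ := by
  simp [lat, periodLattice, Submodule.mem_span_pair, eq_comm]

lemma discreteTopology_periodLattice {p₁ p₂ : ℂ} (hω : (p₂ / p₁).im ≠ 0) :
    DiscreteTopology (periodLattice p₁ p₂) := by
  have hp₁ : p₁ ≠ 0 := by rintro rfl; simp at hω
  have indep : LinearIndependent ℝ ![p₁, p₂] := by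
    refine (LinearIndependent.pair_iff' hp₁).2 fun t ht ↦ hω ?_
    simp [← ht, hp₁]
  exact inferInstanceAs (DiscreteTopology (PeriodPair.mk p₁ p₂ indep).lattice)

variable (p₁ p₂ : ℂ)

lemma vconst_eq_neg_mul_quasiPeriod (ξ₀ p : ℂ) :
    vconst p₁ p₂ ξ₀ p = -ξ₀ * quasiPeriod (periodLattice p₁ p₂) p := by
  have series_eq : ∑' l : {l : ℂ // l ∈ lat p₁ p₂ ∧ l ≠ 0 ∧ l ≠ -p},
      1 / ((l : ℂ) * ((l : ℂ) + p) ^ 2) =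
        ∑' l : periodLattice p₁ p₂, 1 / ((l : ℂ) * ((l : ℂ) + p) ^ 2) := by
    refine tsum_subtype_congr_of_ne_zero (f := fun l : ℂ ↦ 1 / (l * (l + p) ^ 2))
      (s := {l | l ∈ lat p₁ p₂ ∧ l ≠ 0 ∧ l ≠ -p}) (t := periodLattice p₁ p₂) fun l hl ↦ ?_
    have hl₀ : l ≠ 0 := by rintro rfl; simp at hl
    have hlp : l ≠ -p := by rintro rfl; simp at hl
    simp [mem_lat_iff_mem_periodLattice, hl₀, hlp]
  rw [vconst, quasiPeriod, series_eq]
  ring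

lemma wsigma_eq_mul_tprod (z : ℂ) :
    wsigma p₁ p₂ z = z * ∏' l : periodLattice p₁ p₂, elementaryFactor (z / l) := by
  have factor_eq (l : ℂ) :
      exp (z / l + z ^ 2 / (2 * l ^ 2)) * (1 - z / l) = elementaryFactor (z / l) := by
    rw [elementaryFactor, div_pow, div_div, mul_comm (l ^ 2)]
  simp_rw [wsigma, factor_eq]
  congr 1
  refine tprod_subtype_congr_of_ne_one (f := fun l ↦ elementaryFactor (z / l))
    (s := {l | l ∈ lat p₁ p₂ ∧ l ≠ 0}) (t := periodLattice p₁ p₂) fun l hl ↦ ?_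
  have hl₀ : l ≠ 0 := by rintro rfl; simp at hl
  simp [mem_lat_iff_mem_periodLattice, hl₀]

variable [DiscreteTopology (periodLattice p₁ p₂)]

lemma hasProd_sigmaFactor (z : ℂ) :
    HasProd (fun l : periodLattice p₁ p₂ ↦ sigmaFactor l z) (wsigma p₁ p₂ z) := by
  rw [wsigma_eq_mul_tprod]
  convert (hasProd_ite_eq (0 : periodLattice p₁ p₂) z).mul (multipliable_of_summable_sub_one
    (summable_elementaryFactor_sub_one (periodLattice p₁ p₂) z).norm).hasProd using 2 with l
  by_cases hl : l = 0 <;> simp [sigmaFactor, hl]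

variable {p₁ p₂} {p : ℂ}

lemma exists_wsigma_add_eq (hp : p ∈ periodLattice p₁ p₂) (hp₀ : p ≠ 0) :
    ∃ c ≠ 0, ∀ z, wsigma p₁ p₂ (z + p) =
      c * exp (quasiPeriod (periodLattice p₁ p₂) p * z) * wsigma p₁ p₂ z := by
  lift p to periodLattice p₁ p₂ using hp
  obtain ⟨c, hc, const_hasProd⟩ := exists_hasProd_shiftConst _ p
  refine ⟨c, hc, fun z ↦ ?_⟩
  have exp_hasProd := (((hasSum_shiftLinearCoeff _ (by simpa using hp₀)).mul_right z).add
    ((hasSum_shiftQuadraticCoeff _ p).mul_right (z ^ 2))).cexp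
  have product := (const_hasProd.mul exp_hasProd).mul (hasProd_sigmaFactor p₁ p₂ z)
  rw [zero_mul, add_zero] at product
  refine ((Equiv.addRight p).hasProd_iff.2 (hasProd_sigmaFactor p₁ p₂ (z + p))).unique ?_
  simpa only [Function.comp_def, Equiv.coe_addRight, Submodule.coe_add, sigmaFactor_add_add]
    using product

lemma wsigma_div_wsigma_sub_add (hp : p ∈ periodLattice p₁ p₂) (hp₀ : p ≠ 0) (ξ₀ z : ℂ) :
    wsigma p₁ p₂ (z + p) / wsigma p₁ p₂ (z + p - ξ₀) =
      exp (-vconst p₁ p₂ ξ₀ p) * (wsigma p₁ p₂ z / wsigma p₁ p₂ (z - ξ₀)) := by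
  have vconst_eq := vconst_eq_neg_mul_quasiPeriod p₁ p₂ ξ₀ p
  obtain ⟨c, hc, sigma_add⟩ := exists_wsigma_add_eq hp hp₀
  set η := quasiPeriod (periodLattice p₁ p₂) p
  have exp_split : exp (η * z) = exp (-vconst p₁ p₂ ξ₀ p) * exp (η * (z - ξ₀)) := by
    rw [← exp_add, vconst_eq]
    ring_nf
  rw [add_sub_right_comm, sigma_add, sigma_add, mul_div_mul_comm, exp_split,
    mul_div_mul_left _ _ hc, mul_div_cancel_right₀ _ (exp_ne_zero _)]

end Sigma

lemma exp_mul_div_norm_of_im_eq_zero {α : ℂ} (hα : α.im = 0) (w : ℂ) :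
    exp α * w / (‖exp α * w‖ : ℂ) = w / (‖w‖ : ℂ) := by
  lift α to ℝ using hα
  rw [norm_mul, ofReal_mul, norm_exp_ofReal, ofReal_exp, mul_div_mul_left _ _ (exp_ne_zero _)]

theorem converse_doubly_periodic_phase_general
    {p₁ p₂ : ℂ} [DiscreteTopology (periodLattice p₁ p₂)]
    {p : ℂ} (hp : p ∈ periodLattice p₁ p₂) (hp₀ : p ≠ 0)
    {ξ₀ a : ℂ} {g : ℂ → ℂ} (hg : ∀ z, g (z + p) = g z) {m : ℤ}
    (ha : (a * p).im = (vconst p₁ p₂ ξ₀ p).im + 2 * m * Real.pi)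
    {f : ℂ → ℂ}
    (hfdef : ∀ z, f z = exp (a * z) * g z * (wsigma p₁ p₂ z / wsigma p₁ p₂ (z - ξ₀))) :
    (a * p - vconst p₁ p₂ ξ₀ p - 2 * m * Real.pi * I).im = 0 ∧
    (∀ z, f (z + p) = exp (a * p - vconst p₁ p₂ ξ₀ p - 2 * m * Real.pi * I) * f z) ∧
    (∀ z, f z ≠ 0 → f (z + p) ≠ 0 →
      f (z + p) / (‖f (z + p)‖ : ℂ) = f z / (‖f z‖ : ℂ)) := by
  have multiplier_real : (a * p - vconst p₁ p₂ ξ₀ p - 2 * m * Real.pi * I).im = 0 := by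
    rw [sub_im, sub_im, ha]
    simp
  have exp_multiplier : exp (a * p - vconst p₁ p₂ ξ₀ p - 2 * m * Real.pi * I) =
      exp (a * p) * exp (-vconst p₁ p₂ ξ₀ p) := by
    rw [← exp_add, exp_eq_exp_iff_exists_int]
    exact ⟨-m, by push_cast; ring⟩
  have quasi_periodic (z : ℂ) :
      f (z + p) = exp (a * p - vconst p₁ p₂ ξ₀ p - 2 * m * Real.pi * I) * f z := by
    rw [hfdef, hfdef, hg, wsigma_div_wsigma_sub_add hp hp₀, exp_multiplier, mul_add, exp_add]
    ring
  refine ⟨multiplier_real, quasi_periodic, fun z _ _ ↦ ?_⟩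
  rw [quasi_periodic, exp_mul_div_norm_of_im_eq_zero multiplier_real]

/-- Converse direction: if `Im(a pⱼ) = Im(vⱼ) + 2 mⱼ π` and `g` is elliptic (not identically
zero), then `f(z) = e^{az} g(z) σ(z)/σ(z−ξ₀)` satisfies `f(z+pⱼ) = e^{αⱼ} f(z)` with real
`αⱼ = a pⱼ − vⱼ − 2 mⱼ π i`, hence has doubly periodic phase. -/
theorem converse_doubly_periodic_phase
    (p₁ p₂ : ℂ) (hω : (p₂ / p₁).im ≠ 0)
    (ξ₀ a : ℂ) (g : ℂ → ℂ) (hg : MeromorphicOn g Set.univ)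
    (hg₁ : ∀ z, g (z + p₁) = g z) (hg₂ : ∀ z, g (z + p₂) = g z)
    (hgne : ¬ ∀ z, g z = 0)
    (m₁ m₂ : ℤ)
    (ha₁ : (a * p₁).im = (vconst p₁ p₂ ξ₀ p₁).im + 2 * m₁ * Real.pi)
    (ha₂ : (a * p₂).im = (vconst p₁ p₂ ξ₀ p₂).im + 2 * m₂ * Real.pi)
    (f : ℂ → ℂ)
    (hfdef : ∀ z, f z = Complex.exp (a * z) * g z *
      (wsigma p₁ p₂ z / wsigma p₁ p₂ (z - ξ₀))) :
    (a * p₁ - vconst p₁ p₂ ξ₀ p₁ - 2 * m₁ * Real.pi * Complex.I).im = 0 ∧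
    (a * p₂ - vconst p₁ p₂ ξ₀ p₂ - 2 * m₂ * Real.pi * Complex.I).im = 0 ∧
    (∀ z, f (z + p₁) =
      Complex.exp (a * p₁ - vconst p₁ p₂ ξ₀ p₁ - 2 * m₁ * Real.pi * Complex.I) * f z) ∧
    (∀ z, f (z + p₂) =
      Complex.exp (a * p₂ - vconst p₁ p₂ ξ₀ p₂ - 2 * m₂ * Real.pi * Complex.I) * f z) ∧
    (∀ p ∈ ({p₁, p₂} : Set ℂ), ∀ z : ℂ, f z ≠ 0 → f (z + p) ≠ 0 →
      f (z + p) / (‖f (z + p)‖ : ℂ) = f z / (‖f z‖ : ℂ)) := by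
  have := discreteTopology_periodLattice hω
  have hp₁ : p₁ ≠ 0 := by rintro rfl; simp at hω
  have hp₂ : p₂ ≠ 0 := by rintro rfl; simp at hω
  obtain ⟨real₁, quasi₁, phase₁⟩ := converse_doubly_periodic_phase_general
    (Submodule.subset_span (by simp)) hp₁ hg₁ ha₁ hfdef
  obtain ⟨real₂, quasi₂, phase₂⟩ := converse_doubly_periodic_phase_general
    (Submodule.subset_span (by simp)) hp₂ hg₂ ha₂ hfdef
  exact ⟨real₁, real₂, quasi₁, quasi₂, by rintro p (rfl | rfl); exacts [phase₁, phase₂]⟩
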